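/- arXiv:2407.10014 — 2 statements merged into one kernel-verified Lean document; each statement's English description precedes it below -/
import Mathlib

section
/- For every natural number n ≥ 2, there exists a strongly separating set system on Fin n consisting of at most 2·⌈log₂ n⌉ subsets. -/
/-!
Write the elements of `Fin n` in binary with `⌈log₂ n⌉` digits, and for each position `k` and
each value `b` take the set of elements whose `k`-th digit is `b`. This gives at most
`2 * ⌈log₂ n⌉` sets. Distinct `i` and `j` differ in some digit, and the two complementary sets
for that position separate them strongly.
-/

/-- For every natural number `n ≥ 2`, there exists a strongly separating
set system on `Fin n` consisting of at most `2 * ⌈log₂ n⌉` subsets: a family `𝒮` of subsets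
such that for every pair of distinct elements `i j : Fin n` there exist `S, S' ∈ 𝒮` with
`i ∈ S \ S'` and `j ∈ S' \ S`. -/
theorem exists_strongly_separating_set_system (n : ℕ) (hn : 2 ≤ n) :
    ∃ 𝒮 : Finset (Finset (Fin n)),
      𝒮.card ≤ 2 * Nat.clog 2 n ∧
      ∀ i j : Fin n, i ≠ j → ∃ S ∈ 𝒮, ∃ S' ∈ 𝒮, i ∈ S \ S' ∧ j ∈ S' \ S := by
  -- `B (k, b)` collects the elements whose `k`-th binary digit is `b`.
  let B : ℕ × Bool → Finset (Fin n) := fun p =>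
    Finset.univ.filter fun i => i.val.testBit p.1 = p.2
  refine ⟨(Finset.range (Nat.clog 2 n) ×ˢ Finset.univ).image B, ?_, ?_⟩
  · refine Finset.card_image_le.trans ?_
    simp [mul_comm]
  · intro i j hij
    obtain ⟨k, hk⟩ : ∃ k, i.val.testBit k ≠ j.val.testBit k := by
      by_contra! h
      exact hij (Fin.ext (Nat.eq_of_testBit_eq h))
    have hkn : k < Nat.clog 2 n := by
      by_contra! h
      -- Digits from position `⌈log₂ n⌉` on vanish, since `n ≤ 2 ^ ⌈log₂ n⌉`.
      have hpow : n ≤ 2 ^ k := (Nat.le_pow_clog one_lt_two n).trans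
        (Nat.pow_le_pow_right two_pos h)
      exact hk ((Nat.testBit_lt_two_pow (i.isLt.trans_le hpow)).trans
        (Nat.testBit_lt_two_pow (j.isLt.trans_le hpow)).symm)
    have hmem (b : Bool) :
        B (k, b) ∈ (Finset.range (Nat.clog 2 n) ×ˢ Finset.univ).image B :=
      Finset.mem_image_of_mem B (by simp [hkn])
    exact ⟨_, hmem (i.val.testBit k), _, hmem (j.val.testBit k),
      by simp [B, hk], by simp [B, hk.symm]⟩
end

section
/- Fix natural numbers n ≥ 1, d ≥ 2 and T, and a real α ≥ 0 with (T : ℝ) ≥ 4·α·d·Real.log n. Let μ be the product probability measure on Fin n → Bool in which the coordinates are independent and each equals true with probability 1 - 1/d, and let ν be the product over Fin T of μ (on Fin T → Fin n → Bool). Then for every i : Fin n and finite P ⊆ Fin n with i ∉ P and P.card ≤ d, ν {ω | ∀ t : Fin T, ¬(ω t i = false ∧ ∀ j ∈ P, ω t j = true)} ≤ (n : ℝ)^(-α). -/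
/-!
In a single round the coordinates are independent, so the good event "the intervention set contains
`P` and excludes `i`" has probability `(1/d) (1 - 1/d) ^ |P| ≥ (1/d) (1 - 1/d) ^ d`. By Bernoulli's
inequality with the real exponent `d/2 ≥ 1`, `(1 - 1/d) ^ (d/2) ≥ 1/2`, so this probability is at
least `1/(4d)`. The rounds are independent too, so all `T` of them fail with probability at most
`(1 - 1/(4d)) ^ T ≤ exp (-T/(4d)) ≤ exp (-α log n) = n ^ (-α)`.
-/

open MeasureTheory ENNReal

/-- The measure on `Bool` assigning probability `1 - 1/d` to `true` and `1/d` to `false`: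
the distribution of the indicator of "variable included in the random intervention set". -/
noncomputable def bernoulliInclusion (d : ℕ) : Measure Bool :=
  (1 / (d : ℝ≥0∞)) • Measure.dirac false + (1 - 1 / (d : ℝ≥0∞)) • Measure.dirac true

/-- One round of the randomized intervention-selection algorithm: the product measure on
`Fin n → Bool` whose coordinates are independent, each equal to `true` with
probability `1 - 1/d`. -/
noncomputable def interventionRound (n d : ℕ) : Measure (Fin n → Bool) :=
  Measure.pi fun _ : Fin n => bernoulliInclusion d

/-- `T` independent rounds of the randomized intervention-selection algorithm. -/
noncomputable def interventionRounds (n d T : ℕ) : Measure (Fin T → Fin n → Bool) :=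
  Measure.pi fun _ : Fin T => interventionRound n d

lemma bernoulliInclusion_isProbabilityMeasure (d : ℕ) (hd : 2 ≤ d) :
    IsProbabilityMeasure (bernoulliInclusion d) := by
  constructor
  have h : 1 / (d : ℝ≥0∞) ≤ 1 := by
    rw [one_div, ENNReal.inv_le_one]
    exact_mod_cast (by lia : 1 ≤ d)
  simp only [bernoulliInclusion, Measure.add_apply, Measure.smul_apply, measure_univ, smul_eq_mul,
    mul_one]
  exact add_tsub_cancel_of_le h

lemma bernoulliInclusion_false (d : ℕ) (hd : 2 ≤ d) :
    bernoulliInclusion d {false} = ENNReal.ofReal (1 / d) := by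
  have h : (0 : ℝ) < d := by exact_mod_cast (by lia : 0 < d)
  rw [ENNReal.ofReal_div_of_pos h]
  simp [bernoulliInclusion]

lemma bernoulliInclusion_true (d : ℕ) (hd : 2 ≤ d) :
    bernoulliInclusion d {true} = ENNReal.ofReal (1 - 1 / d) := by
  have h : (0 : ℝ) < d := by exact_mod_cast (by lia : 0 < d)
  rw [ENNReal.ofReal_sub _ (by positivity), ENNReal.ofReal_div_of_pos h]
  simp [bernoulliInclusion]

/-- Bernoulli's inequality with exponent `d/2`, squared. -/
lemma quarter_le_one_sub_inv_pow (d : ℕ) (hd : 2 ≤ d) :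
    (1 / 4 : ℝ) ≤ (1 - 1 / (d : ℝ)) ^ d := by
  have hd' : (2 : ℝ) ≤ d := by exact_mod_cast hd
  have h1 : 1 / (d : ℝ) ≤ 1 := by
    rw [div_le_one (by linarith)]; linarith
  have h0 : (0 : ℝ) ≤ 1 - 1 / d := by linarith
  have hB := one_add_mul_self_le_rpow_one_add (s := -(1 / (d : ℝ))) (by linarith)
    (p := (d : ℝ) / 2) (by linarith)
  have hhalf : 1 + (d : ℝ) / 2 * -(1 / (d : ℝ)) = 1 / 2 := by
    field_simp; norm_num
  rw [hhalf, ← sub_eq_add_neg] at hB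
  have hsq : (1 - 1 / (d : ℝ)) ^ d = ((1 - 1 / (d : ℝ)) ^ ((d : ℝ) / 2)) ^ 2 := by
    rw [← Real.rpow_natCast _ 2, ← Real.rpow_mul h0, ← Real.rpow_natCast]
    congr 1
    push_cast
    ring
  rw [hsq]
  nlinarith

/-- The probability that a single round contains `P` and excludes `i` is at least `1/(4d)`. -/
lemma le_interventionRound_good (n d : ℕ) (hd : 2 ≤ d) (i : Fin n) (P : Finset (Fin n))
    (hiP : i ∉ P) (hPcard : P.card ≤ d) :
    ENNReal.ofReal (1 / (4 * d)) ≤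
      interventionRound n d {x | x i = false ∧ ∀ j ∈ P, x j = true} := by
  have := bernoulliInclusion_isProbabilityMeasure d hd
  have hd' : (2 : ℝ) ≤ d := by exact_mod_cast hd
  have h1 : 1 / (d : ℝ) ≤ 1 := by
    rw [div_le_one (by linarith)]; linarith
  have h0 : (0 : ℝ) ≤ 1 - 1 / d := by linarith
  let good : Fin n → Set Bool :=
    fun j => if j = i then {false} else if j ∈ P then {true} else Set.univ
  have hset : {x : Fin n → Bool | x i = false ∧ ∀ j ∈ P, x j = true} = Set.univ.pi good := by
    ext x
    simp only [Set.mem_ofPred_eq, Set.mem_univ_pi, good]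
    constructor
    · rintro ⟨hi, hP⟩ j
      split_ifs with h h'
      · simpa [h] using hi
      · simpa using hP j h'
      · trivial
    · intro h
      refine ⟨by simpa using h i, fun j hj => ?_⟩
      have hji : j ≠ i := fun e => hiP (e ▸ hj)
      simpa [hji, hj] using h j
  have hprod : ∏ j, bernoulliInclusion d (good j) =
      ENNReal.ofReal (1 / d) * ENNReal.ofReal (1 - 1 / d) ^ P.card := by
    rw [← Finset.prod_subset (Finset.subset_univ (insert i P)), Finset.prod_insert hiP]
    · congr 1
      · simp only [good, if_true, bernoulliInclusion_false d hd]
      · refine Finset.prod_eq_pow_card fun j hj => ?_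
        have hji : j ≠ i := fun e => hiP (e ▸ hj)
        simp only [good, hji, hj, if_true, if_false, bernoulliInclusion_true d hd]
    · intro j _ hj
      rw [Finset.mem_insert, not_or] at hj
      simp only [good, hj.1, hj.2, if_false, measure_univ]
  rw [hset, interventionRound, Measure.pi_pi, hprod, ← ENNReal.ofReal_pow h0,
    ← ENNReal.ofReal_mul (by positivity)]
  apply ENNReal.ofReal_le_ofReal
  have hpow : (1 / 4 : ℝ) ≤ (1 - 1 / (d : ℝ)) ^ P.card :=
    (quarter_le_one_sub_inv_pow d hd).trans
      (pow_le_pow_of_le_one h0 (by linarith [show (0 : ℝ) ≤ 1 / d by positivity]) hPcard)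
  calc 1 / (4 * (d : ℝ)) = 1 / d * (1 / 4) := by field_simp
    _ ≤ _ := by gcongr

/-- For `n ≥ 1`, `d ≥ 2`, `α ≥ 0` and `(T : ℝ) ≥ 4·α·d·log n`, the
probability that in none of `T` independent rounds the random intervention set contains a
fixed parent set `P` (with `i ∉ P` and `P.card ≤ d`) while excluding the variable `i` is at
most `(n : ℝ) ^ (-α)` (real power). -/
theorem interventionRounds_all_fail_le (n d T : ℕ) (hn : 1 ≤ n) (hd : 2 ≤ d)
    (α : ℝ) (hα : 0 ≤ α) (hT : (T : ℝ) ≥ 4 * α * (d : ℝ) * Real.log n)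
    (i : Fin n) (P : Finset (Fin n)) (hiP : i ∉ P) (hPcard : P.card ≤ d) :
    interventionRounds n d T
        {ω | ∀ t : Fin T, ¬(ω t i = false ∧ ∀ j ∈ P, ω t j = true)} ≤
      ENNReal.ofReal ((n : ℝ) ^ (-α)) := by
  have := bernoulliInclusion_isProbabilityMeasure d hd
  have : IsProbabilityMeasure (interventionRound n d) := by
    unfold interventionRound; infer_instance
  have hd' : (2 : ℝ) ≤ d := by exact_mod_cast hd
  have hn' : (0 : ℝ) < n := by exact_mod_cast hn
  have hset : {ω : Fin T → Fin n → Bool | ∀ t, ¬(ω t i = false ∧ ∀ j ∈ P, ω t j = true)} =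
      Set.univ.pi fun _ => {x : Fin n → Bool | x i = false ∧ ∀ j ∈ P, x j = true}ᶜ := by
    ext ω
    simp only [Set.mem_ofPred_eq, Set.mem_univ_pi, Set.mem_compl_iff]
  have hround : interventionRound n d {x | x i = false ∧ ∀ j ∈ P, x j = true}ᶜ ≤
      ENNReal.ofReal (Real.exp (-(1 / (4 * d)))) := by
    rw [prob_compl_eq_one_sub (Set.toFinite _).measurableSet]
    calc 1 - interventionRound n d {x | x i = false ∧ ∀ j ∈ P, x j = true}
        ≤ 1 - ENNReal.ofReal (1 / (4 * d)) :=
          tsub_le_tsub_left (le_interventionRound_good n d hd i P hiP hPcard) 1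
      _ = ENNReal.ofReal (1 - 1 / (4 * d)) := by
          rw [ENNReal.ofReal_sub _ (by positivity), ENNReal.ofReal_one]
      _ ≤ _ := ENNReal.ofReal_le_ofReal (Real.one_sub_le_exp_neg _)
  rw [hset, interventionRounds, Measure.pi_pi, Finset.prod_const, Finset.card_univ,
    Fintype.card_fin]
  refine (pow_le_pow_left' hround T).trans ?_
  rw [← ENNReal.ofReal_pow (Real.exp_pos _).le, ← Real.exp_nat_mul, Real.rpow_def_of_pos hn']
  apply ENNReal.ofReal_le_ofReal
  rw [Real.exp_le_exp]
  have key : α * Real.log n ≤ T * (1 / (4 * d)) := by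
    rw [mul_one_div, le_div_iff₀ (by positivity)]
    linarith
  linarith
end
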